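/- Let L : ℝ^d → ℝ be convex, differentiable, and ν_L-strongly smooth (L(w') − L(w) − ⟨w' − w, ∇L(w)⟩ ≤ (ν_L/2)‖w' − w‖²), and let G : ℝ^s → ℝ^d be differentiable, ν_G-strongly smooth, κ_G-Lipschitz, and with ‖DG(z)‖_op ≤ κ_G for all z. Fix ρ > 0, define L_ρ(w, z, λ) := L(w) + ⟨w − G(z), λ⟩ + (ρ/2)‖w − G(z)‖², and let (w*, z*, λ*) satisfy w* = G(z*). Let (w, z, λ) be a current iterate with ‖λ‖ ≤ λ_max and ‖w − G(z)‖ ≤ a, and form one linearized-ADMM iteration with R ≡ 0, H ≡ 0: z⁺ := z − β∇_z L_ρ(w, z, λ), w⁺ := w − α∇_w L_ρ(w, z⁺, λ), λ⁺ := λ + σ(w⁺ − G(z⁺)), with σ ≥ 0 and step sizes α ≤ 1/(ν_L + ρ) and β ≤ 1/(ξ + 2ατ²), where ξ := ν_G(λ_max + ρ·a) + 2ρκ_G² and τ := ρκ_G. Then for every θ ∈ [0, 1]: L_ρ(w⁺, z⁺, λ⁺) − L_ρ(w*, z*, λ*) ≤ (1 − θ)(L_ρ(w, z, λ) − L_ρ(w*,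 z*, λ*)) + θ·(ν_G(λ_max + ρ·a)/2)‖z − z*‖² + θ²(‖w − w*‖²/α + ‖z − z*‖²/(2β)) + σ‖w⁺ − G(z⁺)‖². (The master one-step descent inequality at the heart of the proof of Theorem 1.) -/

import Mathlib

open scoped RealInnerProductSpace

/-- The augmented Lagrangian `L_ρ(w, z, λ) := L(w) + ⟪w − G(z), λ⟫ + (ρ/2)‖w − G(z)‖²`
(with `R ≡ 0` and `H ≡ 0`). -/
noncomputable def augLagrangian {s d : ℕ}
    (L : EuclideanSpace ℝ (Fin d) → ℝ)
    (G : EuclideanSpace ℝ (Fin s) → EuclideanSpace ℝ (Fin d)) (ρ : ℝ)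
    (w : EuclideanSpace ℝ (Fin d)) (z : EuclideanSpace ℝ (Fin s))
    (lam : EuclideanSpace ℝ (Fin d)) : ℝ :=
  L w + ⟪w - G z, lam⟫ + ρ / 2 * ‖w - G z‖ ^ 2

/-!
Both primal updates are gradient steps on `L_ρ(·, ·, λ)`, so each is controlled by a quadratic upper
model whose value at the step is at most its value at the fraction `θ` of the way towards
`(w*, z*)`. The `w`-step uses the gradient at `z⁺` rather than at `z`; the difference
`ρ (G z⁺ - G z)` is split off by Young's inequality and absorbed by the curvature that the `z`-step
has to spare. What is left of first order is `θ` times the linearization of `L_ρ` at `(w, z)` in the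
direction of `(w*, z*)`. This linearization is at most `L w* - L_ρ(w, z, λ)` up to the linearization
error of `G`, because `L` is convex and `w* = G z*`.
-/

section Preliminaries

theorem fderiv_sub_le_of_convexOn {E : Type*} [NormedAddCommGroup E] [NormedSpace ℝ E] {S : Set E}
    {f : E → ℝ} {f' : E →L[ℝ] ℝ} {x y : E} (hf : ConvexOn ℝ S f) (hx : x ∈ S) (hy : y ∈ S)
    (hf' : HasFDerivAt f f' x) : f' (y - x) ≤ f y - f x := by
  have hline : HasDerivAt (f ∘ AffineMap.lineMap (k := ℝ) x y) (f' (y - x)) 0 :=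
    HasFDerivAt.comp_hasDerivAt 0 (by simpa using hf') AffineMap.hasDerivAt_lineMap
  simpa [slope_def_field] using
    (hf.comp_affineMap (AffineMap.lineMap x y)).le_slope_of_hasDerivAt
      (by simpa using hx) (by simpa using hy) one_pos hline

theorem mul_le_one_of_le_one_div {𝕜 : Type*} [Field 𝕜] [LinearOrder 𝕜] [IsStrictOrderedRing 𝕜]
    {x c : 𝕜} (hx : 0 < x) (h : x ≤ 1 / c) : x * c ≤ 1 :=
  (le_div_iff₀ (one_div_pos.1 (hx.trans_le h))).1 h

theorem norm_add_smul_le_of_norm_le {E : Type*} [SeminormedAddCommGroup E] [NormedSpace ℝ E]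
    {ρ a b : ℝ} {x y : E} (hρ : 0 ≤ ρ) (hx : ‖x‖ ≤ a) (hy : ‖y‖ ≤ b) : ‖x + ρ • y‖ ≤ a + ρ * b := by
  refine norm_add_le_of_le hx ?_
  rw [norm_smul, Real.norm_of_nonneg hρ]
  gcongr

variable {E : Type*} [NormedAddCommGroup E] [InnerProductSpace ℝ E]

theorem neg_inner_le_young {α : ℝ} (hα : 0 < α) (x y : E) :
    -⟪x, y⟫ ≤ ‖x‖ ^ 2 / (2 * α) + α / 2 * ‖y‖ ^ 2 := by
  have hsq : ‖x + α • y‖ ^ 2 / (2 * α) = ‖x‖ ^ 2 / (2 * α) + ⟪x, y⟫ + α / 2 * ‖y‖ ^ 2 := by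
    rw [norm_add_sq_real, real_inner_smul_right, norm_smul, Real.norm_of_nonneg hα.le]
    field
  have : 0 ≤ ‖x + α • y‖ ^ 2 / (2 * α) := by positivity
  linarith

theorem gradientStep_model_le {α c : ℝ} (hα : 0 < α) (hc : α * c ≤ 1) {x x' q : E}
    (hx' : x' = x - α • q) (y : E) (θ : ℝ) :
    ⟪x' - x, q⟫ + c / 2 * ‖x' - x‖ ^ 2
      ≤ θ * ⟪y - x, q⟫ + θ ^ 2 * (‖y - x‖ ^ 2 / (2 * α)) := by
  have hstep : x' - x = -(α • q) := by rw [hx']; abel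
  have hdecrease : ⟪x' - x, q⟫ + c / 2 * ‖x' - x‖ ^ 2 ≤ -(α / 2 * ‖q‖ ^ 2) := by
    rw [hstep, inner_neg_left, real_inner_smul_left, real_inner_self_eq_norm_sq, norm_neg,
      norm_smul, Real.norm_of_nonneg hα.le]
    have : α * c * (α / 2 * ‖q‖ ^ 2) ≤ 1 * (α / 2 * ‖q‖ ^ 2) := by gcongr
    linarith
  have hyoung := neg_inner_le_young hα (θ • (y - x)) q
  rw [real_inner_smul_left, norm_smul, mul_pow, Real.norm_eq_abs, sq_abs, mul_div_assoc] at hyoung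
  linarith

theorem inner_add_penalty_add (ρ : ℝ) (r h lam : E) :
    ⟪r + h, lam⟫ + ρ / 2 * ‖r + h‖ ^ 2
      = ⟪r, lam⟫ + ρ / 2 * ‖r‖ ^ 2 + ⟪h, lam + ρ • r⟫ + ρ / 2 * ‖h‖ ^ 2 := by
  rw [norm_add_sq_real, inner_add_left, inner_add_right, real_inner_smul_right,
    real_inner_comm r h]
  ring

theorem abs_inner_linearizationError_le {X : Type*} [NormedAddCommGroup X] [NormedSpace ℝ X]
    {G : X → E} {G' : X →L[ℝ] E} {ν M : ℝ} {z z' : X} {μ : E}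
    (hG : ‖G z' - G z - G' (z' - z)‖ ≤ ν / 2 * ‖z' - z‖ ^ 2) (hμ : ‖μ‖ ≤ M) :
    |⟪G z' - G z, μ⟫ - ⟪G' (z' - z), μ⟫| ≤ ν * M / 2 * ‖z' - z‖ ^ 2 := by
  rw [← inner_sub_left]
  calc |⟪G z' - G z - G' (z' - z), μ⟫|
      ≤ ‖G z' - G z - G' (z' - z)‖ * ‖μ‖ := abs_real_inner_le_norm _ _
    _ ≤ ν / 2 * ‖z' - z‖ ^ 2 * M :=
        mul_le_mul hG hμ (norm_nonneg _) ((norm_nonneg _).trans hG)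
    _ = ν * M / 2 * ‖z' - z‖ ^ 2 := by ring

end Preliminaries

section AugmentedLagrangian

/-- The augmented Lagrangian of `min L(w)` subject to `w = G(z)`, for `w` in a real inner product
space and `z` in any type. It is definitionally `augLagrangian` on Euclidean spaces. -/
noncomputable def hilbertAugLagrangian {Z F : Type*} [NormedAddCommGroup F] [InnerProductSpace ℝ F]
    (L : F → ℝ) (G : Z → F) (ρ : ℝ) (w : F) (z : Z) (lam : F) : ℝ :=
  L w + ⟪w - G z, lam⟫ + ρ / 2 * ‖w - G z‖ ^ 2

/-- The partial gradient `∇_w L_ρ(w, z, λ)` of the augmented Lagrangian, where `gradL` is the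
gradient of `L`. -/
def augLagrangianGradW {Z F : Type*} [AddCommGroup F] [Module ℝ F]
    (gradL : F → F) (G : Z → F) (ρ : ℝ) (w : F) (z : Z) (lam : F) : F :=
  gradL w + lam + ρ • (w - G z)

/-- The partial gradient `∇_z L_ρ(w, z, λ)` of the augmented Lagrangian, where `DG` is the
derivative of `G`. -/
noncomputable def augLagrangianGradZ {E F : Type*}
    [NormedAddCommGroup E] [InnerProductSpace ℝ E] [CompleteSpace E]
    [NormedAddCommGroup F] [InnerProductSpace ℝ F] [CompleteSpace F]
    (G : E → F) (DG : E → E →L[ℝ] F) (ρ : ℝ) (w : F) (z : E) (lam : F) : E :=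
  -((DG z).adjoint (lam + ρ • (w - G z)))

section Expansion

variable {Z F : Type*} [NormedAddCommGroup F] [InnerProductSpace ℝ F]
  {L : F → ℝ} {gradL : F → F} {G : Z → F} {ρ : ℝ}

theorem hilbertAugLagrangian_of_feasible (z : Z) (lam : F) :
    hilbertAugLagrangian L G ρ (G z) z lam = L (G z) := by
  simp [hilbertAugLagrangian]

theorem hilbertAugLagrangian_dualStep (w : F) (z : Z) (lam : F) (σ : ℝ) :
    hilbertAugLagrangian L G ρ w z (lam + σ • (w - G z))
      = hilbertAugLagrangian L G ρ w z lam + σ * ‖w - G z‖ ^ 2 := by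
  simp only [hilbertAugLagrangian, inner_add_right, real_inner_smul_right,
    real_inner_self_eq_norm_sq]
  ring

theorem hilbertAugLagrangian_left_le {νL : ℝ} {w w' : F} (z : Z) (lam : F)
    (hL : L w' - L w - ⟪w' - w, gradL w⟫ ≤ νL / 2 * ‖w' - w‖ ^ 2) :
    hilbertAugLagrangian L G ρ w' z lam
      ≤ hilbertAugLagrangian L G ρ w z lam + (⟪w' - w, augLagrangianGradW gradL G ρ w z lam⟫
          + (νL + ρ) / 2 * ‖w' - w‖ ^ 2) := by
  have hexpand := inner_add_penalty_add ρ (w - G z) (w' - w) lam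
  rw [show w - G z + (w' - w) = w' - G z by abel] at hexpand
  rw [augLagrangianGradW, add_assoc, inner_add_right]
  unfold hilbertAugLagrangian
  linarith

theorem hilbertAugLagrangian_right_eq (w : F) (z z' : Z) (lam : F) :
    hilbertAugLagrangian L G ρ w z' lam
      = hilbertAugLagrangian L G ρ w z lam - ⟪G z' - G z, lam + ρ • (w - G z)⟫
          + ρ / 2 * ‖G z' - G z‖ ^ 2 := by
  have hexpand := inner_add_penalty_add ρ (w - G z) (-(G z' - G z)) lam
  rw [show w - G z + -(G z' - G z) = w - G z' by abel, inner_neg_left, norm_neg] at hexpand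
  unfold hilbertAugLagrangian
  linarith

theorem hilbertAugLagrangian_wStep_le {νL α : ℝ} {w w' : F} {z z' : Z} {lam : F}
    (hL : L w' - L w - ⟪w' - w, gradL w⟫ ≤ νL / 2 * ‖w' - w‖ ^ 2)
    (hα : 0 < α) (hαν : α * (νL + ρ) ≤ 1)
    (hw' : w' = w - α • augLagrangianGradW gradL G ρ w z' lam) (y : F) (θ : ℝ) :
    hilbertAugLagrangian L G ρ w' z' lam
      ≤ hilbertAugLagrangian L G ρ w z' lam + θ * ⟪y - w, augLagrangianGradW gradL G ρ w z lam⟫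
          + θ ^ 2 * (‖y - w‖ ^ 2 / α) + α * ρ ^ 2 / 2 * ‖G z' - G z‖ ^ 2 := by
  have hdescent := hilbertAugLagrangian_left_le (G := G) (ρ := ρ) z' lam hL
  have hmodel := gradientStep_model_le hα hαν hw' y θ
  have hgrad : augLagrangianGradW gradL G ρ w z' lam
      = augLagrangianGradW gradL G ρ w z lam - ρ • (G z' - G z) := by
    unfold augLagrangianGradW; module
  have hinner : ⟪y - w, augLagrangianGradW gradL G ρ w z' lam⟫
      = ⟪y - w, augLagrangianGradW gradL G ρ w z lam⟫ - ρ * ⟪y - w, G z' - G z⟫ := by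
    rw [hgrad, inner_sub_right, real_inner_smul_right]
  have hcross := neg_inner_le_young hα (θ • (y - w)) (ρ • (G z' - G z))
  simp only [real_inner_smul_left, real_inner_smul_right, norm_smul, mul_pow, Real.norm_eq_abs,
    sq_abs] at hcross
  rw [hinner] at hmodel
  have hhalves : θ ^ 2 * (‖y - w‖ ^ 2 / α)
      = θ ^ 2 * (‖y - w‖ ^ 2 / (2 * α)) + θ ^ 2 * ‖y - w‖ ^ 2 / (2 * α) := by field
  linarith

end Expansion

variable {E F : Type*} [NormedAddCommGroup E] [InnerProductSpace ℝ E] [CompleteSpace E]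
  [NormedAddCommGroup F] [InnerProductSpace ℝ F] [CompleteSpace F]
  {L : F → ℝ} {gradL : F → F} {G : E → F} {DG : E → E →L[ℝ] F} {ρ νG M : ℝ}

theorem inner_augLagrangianGradZ (w : F) (z x : E) (lam : F) :
    ⟪x, augLagrangianGradZ G DG ρ w z lam⟫ = -⟪DG z x, lam + ρ • (w - G z)⟫ := by
  rw [augLagrangianGradZ, inner_neg_right, ContinuousLinearMap.adjoint_inner_right]

theorem hilbertAugLagrangian_right_le {κ : ℝ} {w : F} {z z' : E} {lam : F} (hρ : 0 ≤ ρ)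
    (hGsmooth : ‖G z' - G z - DG z (z' - z)‖ ≤ νG / 2 * ‖z' - z‖ ^ 2)
    (hGlip : ‖G z' - G z‖ ≤ κ * ‖z' - z‖) (hM : ‖lam + ρ • (w - G z)‖ ≤ M) :
    hilbertAugLagrangian L G ρ w z' lam
      ≤ hilbertAugLagrangian L G ρ w z lam + (⟪z' - z, augLagrangianGradZ G DG ρ w z lam⟫
          + (νG * M + ρ * κ ^ 2) / 2 * ‖z' - z‖ ^ 2) := by
  have hlin := neg_le_of_abs_le (abs_inner_linearizationError_le hGsmooth hM)
  have hpenalty : ρ / 2 * ‖G z' - G z‖ ^ 2 ≤ ρ / 2 * (κ * ‖z' - z‖) ^ 2 := by gcongr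
  rw [hilbertAugLagrangian_right_eq w z z', inner_augLagrangianGradZ]
  linarith

theorem hilbertAugLagrangian_zStep_le {κ β c : ℝ} {w : F} {z z' : E} {lam : F} (hρ : 0 ≤ ρ)
    (hGsmooth : ‖G z' - G z - DG z (z' - z)‖ ≤ νG / 2 * ‖z' - z‖ ^ 2)
    (hGlip : ‖G z' - G z‖ ≤ κ * ‖z' - z‖) (hM : ‖lam + ρ • (w - G z)‖ ≤ M)
    (hβ : 0 < β) (hβν : β * (νG * M + ρ * κ ^ 2 + c) ≤ 1)
    (hz' : z' = z - β • augLagrangianGradZ G DG ρ w z lam) (y : E) (θ : ℝ) :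
    hilbertAugLagrangian L G ρ w z' lam + c / 2 * ‖z' - z‖ ^ 2
      ≤ hilbertAugLagrangian L G ρ w z lam + θ * ⟪y - z, augLagrangianGradZ G DG ρ w z lam⟫
          + θ ^ 2 * (‖y - z‖ ^ 2 / (2 * β)) := by
  have hdescent := hilbertAugLagrangian_right_le (L := L) hρ hGsmooth hGlip hM
  have hmodel := gradientStep_model_le hβ hβν hz' y θ
  linarith

theorem inner_augLagrangianGrad_le_of_feasible {w : F} {z zstar : E} {lam : F}
    (hconv : ConvexOn ℝ Set.univ L) (hL : HasGradientAt L (gradL w) w) (hρ : 0 ≤ ρ)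
    (hGsmooth : ‖G zstar - G z - DG z (zstar - z)‖ ≤ νG / 2 * ‖zstar - z‖ ^ 2)
    (hM : ‖lam + ρ • (w - G z)‖ ≤ M) :
    ⟪G zstar - w, augLagrangianGradW gradL G ρ w z lam⟫
        + ⟪zstar - z, augLagrangianGradZ G DG ρ w z lam⟫
      ≤ L (G zstar) - hilbertAugLagrangian L G ρ w z lam + νG * M / 2 * ‖zstar - z‖ ^ 2 := by
  have hconvex : ⟪G zstar - w, gradL w⟫ ≤ L (G zstar) - L w := by
    simpa [real_inner_comm] using fderiv_sub_le_of_convexOn hconv trivial trivial hL.hasFDerivAt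
  have hlin := le_of_abs_le (abs_inner_linearizationError_le hGsmooth hM)
  -- Feasibility: the `w`- and `z`-displacements differ by the current residual `w - G z`.
  have hresidual : ⟪G zstar - w, lam + ρ • (w - G z)⟫ = ⟪G zstar - G z, lam + ρ • (w - G z)⟫
      - (⟪w - G z, lam⟫ + ρ * ‖w - G z‖ ^ 2) := by
    rw [← real_inner_self_eq_norm_sq, ← real_inner_smul_right, ← inner_add_right, ← inner_sub_left,
      sub_sub_sub_cancel_right]
  have hpenalty : 0 ≤ ρ / 2 * ‖w - G z‖ ^ 2 := by positivity
  rw [augLagrangianGradW, add_assoc, inner_add_right, inner_augLagrangianGradZ]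
  unfold hilbertAugLagrangian
  linarith

theorem admm_one_step_descent_general {νL κ α β σ θ : ℝ} {w wplus lam : F} {z zplus zstar : E}
    (hconv : ConvexOn ℝ Set.univ L) (hL : ∀ w, HasGradientAt L (gradL w) w)
    (hLsmooth : ∀ w w', L w' - L w - ⟪w' - w, gradL w⟫ ≤ νL / 2 * ‖w' - w‖ ^ 2)
    (hG : ∀ z, HasFDerivAt G (DG z) z)
    (hGsmooth : ∀ z z', ‖G z' - G z - DG z (z' - z)‖ ≤ νG / 2 * ‖z' - z‖ ^ 2)
    (hDG : ∀ z, ‖DG z‖ ≤ κ) (hρ : 0 ≤ ρ) (hM : ‖lam + ρ • (w - G z)‖ ≤ M)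
    (hα : 0 < α) (hβ : 0 < β) (hαν : α * (νL + ρ) ≤ 1)
    (hβν : β * (νG * M + ρ * κ ^ 2 + α * (ρ * κ) ^ 2) ≤ 1)
    (hzplus : zplus = z - β • augLagrangianGradZ G DG ρ w z lam)
    (hwplus : wplus = w - α • augLagrangianGradW gradL G ρ w zplus lam) (hθ : 0 ≤ θ) :
    hilbertAugLagrangian L G ρ wplus zplus (lam + σ • (wplus - G zplus)) - L (G zstar)
      ≤ (1 - θ) * (hilbertAugLagrangian L G ρ w z lam - L (G zstar))
        + θ * (νG * M / 2) * ‖z - zstar‖ ^ 2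
        + θ ^ 2 * (‖w - G zstar‖ ^ 2 / α + ‖z - zstar‖ ^ 2 / (2 * β))
        + σ * ‖wplus - G zplus‖ ^ 2 := by
  have hlip : ‖G zplus - G z‖ ≤ κ * ‖zplus - z‖ :=
    convex_univ.norm_image_sub_le_of_norm_hasFDerivWithin_le
      (fun x _ => (hG x).hasFDerivWithinAt) (fun x _ => hDG x) trivial trivial
  have hw := hilbertAugLagrangian_wStep_le (z := z) (hLsmooth w wplus) hα hαν hwplus (G zstar) θ
  have hz := hilbertAugLagrangian_zStep_le (L := L) hρ (hGsmooth z zplus) hlip hM hβ hβν hzplus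
    zstar θ
  have habsorb : α * ρ ^ 2 / 2 * ‖G zplus - G z‖ ^ 2 ≤ α * ρ ^ 2 / 2 * (κ * ‖zplus - z‖) ^ 2 := by
    gcongr
  have hfirst := mul_le_mul_of_nonneg_left
    (inner_augLagrangianGrad_le_of_feasible hconv (hL w) hρ (hGsmooth z zstar) hM) hθ
  rw [hilbertAugLagrangian_dualStep, norm_sub_rev w, norm_sub_rev z]
  linarith

end AugmentedLagrangian

/-- the master one-step descent inequality at the heart of the
proof of Theorem 1. One linearized-ADMM iteration
`z⁺ = z − β∇_z L_ρ(w, z, λ)`, `w⁺ = w − α∇_w L_ρ(w, z⁺, λ)`,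
`λ⁺ = λ + σ(w⁺ − G(z⁺))`, with step sizes `α ≤ 1/(ν_L + ρ)` and
`β ≤ 1/(ξ + 2ατ²)` where `ξ = ν_G(λ_max + ρa) + 2ρκ_G²` and `τ = ρκ_G`,
decreases the augmented Lagrangian as stated, for every `θ ∈ [0, 1]`. -/
theorem admm_one_step_descent {s d : ℕ}
    (L : EuclideanSpace ℝ (Fin d) → ℝ)
    (hconv : ConvexOn ℝ Set.univ L)
    (gradL : EuclideanSpace ℝ (Fin d) → EuclideanSpace ℝ (Fin d))
    (hL : ∀ w, HasGradientAt L (gradL w) w)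
    (νL : ℝ)
    (hLsmooth : ∀ w w' : EuclideanSpace ℝ (Fin d),
      L w' - L w - ⟪w' - w, gradL w⟫ ≤ νL / 2 * ‖w' - w‖ ^ 2)
    (G : EuclideanSpace ℝ (Fin s) → EuclideanSpace ℝ (Fin d))
    (DG : EuclideanSpace ℝ (Fin s) →
      EuclideanSpace ℝ (Fin s) →L[ℝ] EuclideanSpace ℝ (Fin d))
    (hG : ∀ z, HasFDerivAt G (DG z) z)
    (νG κG : ℝ)
    (hGsmooth : ∀ z z' : EuclideanSpace ℝ (Fin s),
      ‖G z' - G z - DG z (z' - z)‖ ≤ νG / 2 * ‖z' - z‖ ^ 2)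
    (hGLip : ∀ z z' : EuclideanSpace ℝ (Fin s), ‖G z' - G z‖ ≤ κG * ‖z' - z‖)
    (hDGbound : ∀ z : EuclideanSpace ℝ (Fin s), ‖DG z‖ ≤ κG)
    (ρ : ℝ) (hρ : 0 < ρ)
    (wstar : EuclideanSpace ℝ (Fin d)) (zstar : EuclideanSpace ℝ (Fin s))
    (lamstar : EuclideanSpace ℝ (Fin d))
    (hfeas : wstar = G zstar)
    (w : EuclideanSpace ℝ (Fin d)) (z : EuclideanSpace ℝ (Fin s))
    (lam : EuclideanSpace ℝ (Fin d))
    (lamMax a : ℝ) (hlam : ‖lam‖ ≤ lamMax) (ha : ‖w - G z‖ ≤ a)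
    (σ : ℝ) (hσ : 0 ≤ σ)
    (ξ τ α β : ℝ)
    (hξ : ξ = νG * (lamMax + ρ * a) + 2 * ρ * κG ^ 2)
    (hτ : τ = ρ * κG)
    (hα : 0 < α) (hβ : 0 < β)
    (hαle : α ≤ 1 / (νL + ρ)) (hβle : β ≤ 1 / (ξ + 2 * α * τ ^ 2))
    (zplus : EuclideanSpace ℝ (Fin s))
    (hzplus : zplus = z - β • (-((DG z).adjoint (lam + ρ • (w - G z)))))
    (wplus : EuclideanSpace ℝ (Fin d))
    (hwplus : wplus = w - α • (gradL w + lam + ρ • (w - G zplus)))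
    (lamplus : EuclideanSpace ℝ (Fin d))
    (hlamplus : lamplus = lam + σ • (wplus - G zplus)) :
    ∀ θ ∈ Set.Icc (0 : ℝ) 1,
      augLagrangian L G ρ wplus zplus lamplus
          - augLagrangian L G ρ wstar zstar lamstar
        ≤ (1 - θ) * (augLagrangian L G ρ w z lam
              - augLagrangian L G ρ wstar zstar lamstar)
          + θ * (νG * (lamMax + ρ * a) / 2) * ‖z - zstar‖ ^ 2
          + θ ^ 2 * (‖w - wstar‖ ^ 2 / α + ‖z - zstar‖ ^ 2 / (2 * β))
          + σ * ‖wplus - G zplus‖ ^ 2 := by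
  rintro θ ⟨hθ, -⟩
  subst hfeas hξ hτ hlamplus
  have hstep := mul_le_one_of_le_one_div hβ hβle
  have hslack : 0 ≤ β * (ρ * κG ^ 2 + α * (ρ * κG) ^ 2) := by positivity
  have hstar : augLagrangian L G ρ (G zstar) zstar lamstar = L (G zstar) :=
    hilbertAugLagrangian_of_feasible zstar lamstar
  rw [hstar]
  exact admm_one_step_descent_general hconv hL hLsmooth hG hGsmooth hDGbound hρ.le
    (norm_add_smul_le_of_norm_le hρ.le hlam ha) hα hβ (mul_le_one_of_le_one_div hα hαle)
    (by linarith) hzplus hwplus hθ
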